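/- There exists a voting method whose domain is the set of all profiles with at most 5 candidates that satisfies anonymity, neutrality, binary quasi-resoluteness, binary γ, and α-resoluteness. -/

import Mathlib

/- Formalization of voting-theoretic notions from Holliday, Norman, Pacuit, Zahedian,
"Impossibility theorems involving weakenings of expansion consistency and resoluteness
in voting". Candidates form an infinite type `C` and voters an infinite type `V`. -/

open Classical

noncomputable section

/-- `L` is a strict linear order on exactly the finite set `s`. -/
def IsStrictLinearOrderOn {C : Type} (s : Finset C) (L : C → C → Prop) : Prop :=
  (∀ x, ¬ L x x) ∧ (∀ x y z, L x y → L y z → L x z) ∧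
    (∀ x ∈ s, ∀ y ∈ s, x ≠ y → L x y ∨ L y x) ∧ ∀ x y, L x y → x ∈ s ∧ y ∈ s

/-- Restriction of a relation to a finite set `A`. -/
def restrictRel {C : Type} (A : Finset C) (L : C → C → Prop) : C → C → Prop :=
  fun x y => L x y ∧ x ∈ A ∧ y ∈ A

theorem IsStrictLinearOrderOn.restrict {C : Type} {s A : Finset C} {L : C → C → Prop}
    (h : IsStrictLinearOrderOn s L) (hA : A ⊆ s) :
    IsStrictLinearOrderOn A (restrictRel A L) := by
  obtain ⟨hirr, htr, htot, hdom⟩ := h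
  refine ⟨fun x hx => hirr x hx.1,
    fun x y z hxy hyz => ⟨htr _ _ _ hxy.1 hyz.1, hxy.2.1, hyz.2.2⟩, ?_,
    fun x y hxy => ⟨hxy.2.1, hxy.2.2⟩⟩
  intro x hx y hy hne
  rcases htot x (hA hx) y (hA hy) hne with h' | h'
  · exact Or.inl ⟨h', hx, hy⟩
  · exact Or.inr ⟨h', hy, hx⟩

/-- The image of a relation under the transposition of `a` and `b`. -/
def swapRel {C : Type} (a b : C) (L : C → C → Prop) : C → C → Prop :=
  fun x y => L (Equiv.swap a b x) (Equiv.swap a b y)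

theorem IsStrictLinearOrderOn.swapRel_mem {C : Type} {s : Finset C} {L : C → C → Prop}
    (a b : C) (h : IsStrictLinearOrderOn s L) :
    IsStrictLinearOrderOn (s.image (Equiv.swap a b)) (swapRel a b L) := by
  obtain ⟨hirr, htr, htot, hdom⟩ := h
  refine ⟨fun x => hirr _, fun x y z hxy hyz => htr _ _ _ hxy hyz, ?_, ?_⟩
  · intro x hx y hy hne
    obtain ⟨x', hx', rfl⟩ := Finset.mem_image.mp hx
    obtain ⟨y', hy', rfl⟩ := Finset.mem_image.mp hy
    have hne' : x' ≠ y' := by rintro rfl; exact hne rfl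
    have := htot x' hx' y' hy' hne'
    simpa [swapRel, Equiv.swap_apply_self] using this
  · intro x y hxy
    obtain ⟨h1, h2⟩ := hdom _ _ hxy
    exact ⟨Finset.mem_image.mpr ⟨_, h1, Equiv.swap_apply_self a b x⟩,
      Finset.mem_image.mpr ⟨_, h2, Equiv.swap_apply_self a b y⟩⟩

/-- A preference profile: each voter in the finite set `voters` submits a strict linear
order of the finite nonempty set `cands` of candidates. -/
structure Profile (C V : Type) where
  voters : Finset V
  cands : Finset C
  cands_nonempty : cands.Nonempty
  ballot : V → C → C → Prop
  ballot_lin : ∀ i ∈ voters, IsStrictLinearOrderOn cands (ballot i)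

namespace Profile

variable {C V : Type}

/-- The margin of `x` over `y` in `P`: the number of voters ranking `x` above `y`
minus the number of voters ranking `y` above `x`. -/
def margin (P : Profile C V) (x y : C) : ℤ :=
  ((P.voters.filter (fun i => P.ballot i x y)).card : ℤ) -
    ((P.voters.filter (fun i => P.ballot i y x)).card : ℤ)

/-- The profile `P^{i⇄j}` obtained by transposing the voters `i` and `j`. -/
def swapVoters (P : Profile C V) (i j : V) : Profile C V where
  voters := P.voters.image (Equiv.swap i j)
  cands := P.cands
  cands_nonempty := P.cands_nonempty
  ballot := fun k => P.ballot (Equiv.swap i j k)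
  ballot_lin := by
    intro k hk
    obtain ⟨m, hm, rfl⟩ := Finset.mem_image.mp hk
    simpa [Equiv.swap_apply_self] using P.ballot_lin m hm

/-- The profile `P_{a⇄b}` obtained by transposing the candidates `a` and `b`. -/
def swapCands (P : Profile C V) (a b : C) : Profile C V where
  voters := P.voters
  cands := P.cands.image (Equiv.swap a b)
  cands_nonempty := P.cands_nonempty.image _
  ballot := fun i => swapRel a b (P.ballot i)
  ballot_lin := fun i hi => (P.ballot_lin i hi).swapRel_mem a b

/-- The restriction `P|_A` of a profile to a nonempty subset `A` of its candidates. -/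
def restrict (P : Profile C V) (A : Finset C) (hA : A.Nonempty) (hsub : A ⊆ P.cands) :
    Profile C V where
  voters := P.voters
  cands := A
  cands_nonempty := hA
  ballot := fun i => restrictRel A (P.ballot i)
  ballot_lin := fun i hi => (P.ballot_lin i hi).restrict hsub

/-- The profile `P_{-y}`, i.e. `P` with the candidate `y` removed. -/
def minus (P : Profile C V) (y : C) (h : (P.cands.erase y).Nonempty) : Profile C V :=
  P.restrict (P.cands.erase y) h (P.cands.erase_subset y)

/-- The profile `P|_{{x,y}}`, i.e. `P` restricted to the two candidates `x` and `y`. -/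
def pair (P : Profile C V) (x y : C) (hx : x ∈ P.cands) (hy : y ∈ P.cands) : Profile C V :=
  P.restrict {x, y} ⟨x, Finset.mem_insert_self x {y}⟩
    (by
      intro z hz
      rcases Finset.mem_insert.mp hz with rfl | hz
      · exact hx
      · rcases Finset.mem_singleton.mp hz with rfl
        exact hy)

/-- `P` is uniquely weighted: no two distinct ordered pairs of distinct candidates
have the same margin. -/
def UniquelyWeighted (P : Profile C V) : Prop :=
  ∀ a ∈ P.cands, ∀ b ∈ P.cands, ∀ x ∈ P.cands, ∀ y ∈ P.cands,
    a ≠ b → x ≠ y → (a, b) ≠ (x, y) → P.margin a b ≠ P.margin x y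

/-- `P` is uniquely ranked: in every subelection with at least two candidates, no two
candidates have the same number of `n`-th place votes, and no two candidates have the
same Borda score. -/
def UniquelyRanked (P : Profile C V) : Prop :=
  ∀ Y ⊆ P.cands, 2 ≤ Y.card →
    ((∀ n : ℕ, 1 ≤ n → n ≤ Y.card → ∀ x ∈ Y, ∀ y ∈ Y, x ≠ y →
        (P.voters.filter
            (fun i => (Y.filter (fun z => P.ballot i z x)).card = n - 1)).card ≠
          (P.voters.filter
            (fun i => (Y.filter (fun z => P.ballot i z y)).card = n - 1)).card) ∧
      (∀ x ∈ Y, ∀ y ∈ Y, x ≠ y →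
        (∑ i ∈ P.voters, (Y.filter (fun z => P.ballot i x z)).card) ≠
          ∑ i ∈ P.voters, (Y.filter (fun z => P.ballot i y z)).card))

/-- `Q` is an `n`-fold copy `nP` of `P`: same candidates, and there is a map sending
the voters of `Q` onto the voters of `P` such that each voter of `P` has exactly `n`
preimages, each with the same ballot. -/
def IsCopy (Q P : Profile C V) (n : ℕ) : Prop :=
  Q.cands = P.cands ∧
    ∃ h : V → V,
      (∀ j ∈ Q.voters, h j ∈ P.voters) ∧
      (∀ i ∈ P.voters, (Q.voters.filter (fun j => h j = i)).card = n) ∧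
      (∀ j ∈ Q.voters, Q.ballot j = P.ballot (h j))

/-- `Q` is obtained from `P` by deleting one voter with each linear order of the
candidates of `P`. -/
def IsCancelOf (Q P : Profile C V) : Prop :=
  Q.cands = P.cands ∧ Q.voters ⊆ P.voters ∧
    (∀ j ∈ Q.voters, Q.ballot j = P.ballot j) ∧
    ∀ L : C → C → Prop, IsStrictLinearOrderOn P.cands L →
      ((P.voters \ Q.voters).filter (fun i => P.ballot i = L)).card = 1

end Profile

/-- A voting method: a function assigning to each profile in a nonempty domain a
nonempty set of winners among its candidates. -/
structure VotingMethod (C V : Type) where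
  dom : Set (Profile C V)
  dom_nonempty : dom.Nonempty
  winners : Profile C V → Finset C
  winners_nonempty : ∀ P ∈ dom, (winners P).Nonempty
  winners_sub : ∀ P ∈ dom, winners P ⊆ P.cands

namespace VotingMethod

variable {C V : Type}

/-- Anonymity: transposing two voters does not change the winners. -/
def Anonymous (F : VotingMethod C V) : Prop :=
  ∀ P ∈ F.dom, ∀ i j : V, P.swapVoters i j ∈ F.dom →
    F.winners (P.swapVoters i j) = F.winners P

/-- Neutrality: transposing two candidates transposes the winners accordingly. -/
def Neutral (F : VotingMethod C V) : Prop :=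
  ∀ P ∈ F.dom, ∀ a b : C, P.swapCands a b ∈ F.dom →
    F.winners (P.swapCands a b) = (F.winners P).image (Equiv.swap a b)

/-- Binary resoluteness: a unique winner in any two-candidate profile. -/
def BinaryResolute (F : VotingMethod C V) : Prop :=
  ∀ P ∈ F.dom, P.cands.card = 2 → (F.winners P).card = 1

/-- Binary quasi-resoluteness: a unique winner in any two-candidate profile whose
two distinct candidates have a nonzero margin between them. -/
def BinaryQuasiResolute (F : VotingMethod C V) : Prop :=
  ∀ P ∈ F.dom, P.cands.card = 2 →
    (∀ x ∈ P.cands, ∀ y ∈ P.cands, x ≠ y → P.margin x y ≠ 0) →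
    (F.winners P).card = 1

/-- Quasi-resoluteness: a unique winner in any uniquely weighted profile. -/
def QuasiResolute (F : VotingMethod C V) : Prop :=
  ∀ P ∈ F.dom, P.UniquelyWeighted → (F.winners P).card = 1

/-- Weak quasi-resoluteness: a unique winner in any profile that is both uniquely
weighted and uniquely ranked. -/
def WeakQuasiResolute (F : VotingMethod C V) : Prop :=
  ∀ P ∈ F.dom, P.UniquelyWeighted → P.UniquelyRanked → (F.winners P).card = 1

/-- Binary γ: if `x` wins without `y` and wins the head-to-head against `y`,
then `x` wins with `y` included. -/
def BinaryGamma (F : VotingMethod C V) : Prop :=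
  ∀ P ∈ F.dom, ∀ x, ∀ hx : x ∈ P.cands, ∀ y, ∀ hy : y ∈ P.cands, x ≠ y →
    ∀ h : (P.cands.erase y).Nonempty,
      P.minus y h ∈ F.dom → P.pair x y hx hy ∈ F.dom →
      x ∈ F.winners (P.minus y h) → F.winners (P.pair x y hx hy) = {x} →
      x ∈ F.winners P

/-- α-resoluteness: if `x` wins without `y` and wins the head-to-head against `y`,
then adding `y` does not enlarge the set of winners. -/
def AlphaResolute (F : VotingMethod C V) : Prop :=
  ∀ P ∈ F.dom, ∀ x, ∀ hx : x ∈ P.cands, ∀ y, ∀ hy : y ∈ P.cands, x ≠ y →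
    ∀ h : (P.cands.erase y).Nonempty,
      P.minus y h ∈ F.dom → P.pair x y hx hy ∈ F.dom →
      x ∈ F.winners (P.minus y h) → F.winners (P.pair x y hx hy) = {x} →
      (F.winners P).card ≤ (F.winners (P.minus y h)).card

/-- Homogeneity: replacing each voter by `n` copies of that voter does not change
the winners. -/
def Homogeneous (F : VotingMethod C V) : Prop :=
  ∀ P ∈ F.dom, ∀ Q ∈ F.dom, ∀ n : ℕ, 0 < n → Q.IsCopy P n → F.winners Q = F.winners P

/-- Cancellativity: deleting one voter with each linear order of the candidates does
not change the winners. -/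
def Cancellative (F : VotingMethod C V) : Prop :=
  ∀ P ∈ F.dom, ∀ Q ∈ F.dom, Q.IsCancelOf P → F.winners Q = F.winners P

/-- Majoritarianism: the winners depend only on the majority graph of the profile. -/
def Majoritarian (F : VotingMethod C V) : Prop :=
  ∀ P ∈ F.dom, ∀ P' ∈ F.dom, P.cands = P'.cands →
    (∀ x ∈ P.cands, ∀ y ∈ P.cands, (0 < P.margin x y ↔ 0 < P'.margin x y)) →
    F.winners P = F.winners P'

/-- Pairwiseness: the winners depend only on the margin graph of the profile. -/
def Pairwise (F : VotingMethod C V) : Prop :=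
  ∀ P ∈ F.dom, ∀ P' ∈ F.dom, P.cands = P'.cands →
    (∀ x ∈ P.cands, ∀ y ∈ P.cands, P.margin x y = P'.margin x y) →
    F.winners P = F.winners P'

end VotingMethod

/-! ### Finite computations

Head-to-head results are coded by `2` (win), `1` (tie), `0` (loss). -/

/-- The winner table for four candidates. -/
def tbl : ℕ :=
  2409484295773690046655223255184075532527482321882214031195952667205592082112249000171515046126753302053754217478508227589979712176163930456262819703824927255925415741312086549435682176047110491169380347492542279339696128

/-- `ph xa xb xc ab ac bc`: does `x` win among `x, a, b, c`? -/
def ph (xa xb xc ab ac bc : ℕ) : Bool :=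
  Nat.beq (Nat.land 1 (Nat.shiftRight tbl
    (xa + 3 * xb + 9 * xc + 27 * ab + 81 * ac + 243 * bc))) 1

def ph3 (xa xb ab : ℕ) : Bool := ph xa xb 2 ab 2 2

def Bv (vp vq vr vs pq pr ps qr qs rs : ℕ) : Bool :=
  (Nat.beq vp 2 && ph vq vr vs qr qs rs) || ((Nat.beq vq 2 && ph vp vr vs pr ps rs) ||
  ((Nat.beq vr 2 && ph vp vq vs pq ps qs) || (Nat.beq vs 2 && ph vp vq vr pq pr qr)))

def all3 (p : ℕ → Bool) : Bool := p 0 && (p 1 && p 2)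

theorem all3_spec {p : ℕ → Bool} (h : all3 p = true) (e : ℕ) (he : e ≤ 2) : p e = true := by
  simp only [all3, Bool.and_eq_true] at h
  obtain ⟨h0, h1, h2⟩ := h
  interval_cases e <;> assumption

def imp (a b : Bool) : Bool := match a with
  | true => b
  | false => true

theorem imp_spec {a b : Bool} (h : imp a b = true) (ha : a = true) : b = true := by
  subst ha; exact h

def bn (b : Bool) : ℕ := match b with
  | true => 1
  | false => 0

def chk5 : Bool :=
  all3 fun xa => all3 fun xb => all3 fun xc => all3 fun ab => all3 fun ac => all3 fun bc =>
  imp (ph xa xb xc ab ac bc) (all3 fun ya => all3 fun yb => all3 fun yc =>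
    Nat.ble (bn (Bv 0 ya yb yc xa xb xc ab ac bc) +
        (bn (Bv (2-xa) (2-ya) ab ac 2 xb xc yb yc bc) +
        (bn (Bv (2-xb) (2-yb) (2-ab) bc 2 xa xc ya yc ac) +
        bn (Bv (2-xc) (2-yc) (2-ac) (2-bc) 2 xa xb ya yb ab))))
      (bn (ph (2-xa) ab ac xb xc bc) + (bn (ph (2-xb) (2-ab) bc xa xc ac) +
        bn (ph (2-xc) (2-ac) (2-bc) xa xb ab))))

theorem chk5_true : chk5 = true := by decide +kernel

def chk4 : Bool :=
  all3 fun xa => all3 fun xb => all3 fun ab =>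
  imp (ph3 xa xb ab) (all3 fun ya => all3 fun yb =>
    ph 2 xa xb ya yb ab &&
    Nat.ble (bn (ph 0 ya yb xa xb ab) +
        (bn (ph (2-xa) (2-ya) ab 2 xb yb) +
        bn (ph (2-xb) (2-yb) (2-ab) 2 xa ya)))
      (bn (ph3 (2-xa) ab xb) + bn (ph3 (2-xb) (2-ab) xa)))

theorem chk4_true : chk4 = true := by decide +kernel

def chk3 : Bool :=
  all3 fun xa =>
  imp (Bool.not (Nat.beq xa 0)) (all3 fun ya =>
    ph3 2 xa ya &&
    Nat.ble (bn (ph3 0 ya xa) + bn (ph3 (2-xa) (2-ya) 2))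
      (bn (Bool.not (Nat.beq (2-xa) 0))))

theorem chk3_true : chk3 = true := by decide +kernel

/-- Symmetry of the four-candidate table. -/
def chkS : Bool :=
  all3 fun xa => all3 fun xb => all3 fun xc => all3 fun ab => all3 fun ac => all3 fun bc =>
  (ph xa xb xc ab ac bc == ph xb xa xc (2-ab) bc ac) &&
  (ph xa xb xc ab ac bc == ph xa xc xb ac ab (2-bc))

theorem chkS_true : chkS = true := by decide +kernel

def chkS3 : Bool :=
  all3 fun xa => all3 fun xb => all3 fun ab => (ph3 xa xb ab == ph3 xb xa (2-ab))

theorem chkS3_true : chkS3 = true := by decide +kernel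

/-- Some candidate wins. -/
def chkN : Bool :=
  all3 fun xa => all3 fun xb => all3 fun xc => all3 fun ab => all3 fun ac => all3 fun bc =>
  ph xa xb xc ab ac bc || (ph (2-xa) ab ac xb xc bc || (ph (2-xb) (2-ab) bc xa xc ac ||
        ph (2-xc) (2-ac) (2-bc) xa xb ab))

theorem chkN_true : chkN = true := by decide +kernel

def chkN3 : Bool :=
  all3 fun xa => all3 fun xb => all3 fun ab =>
  ph3 xa xb ab || (ph3 (2-xa) ab xb || ph3 (2-xb) (2-ab) xa)

theorem chkN3_true : chkN3 = true := by decide +kernel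
/-! ### The rule -/

section rule

variable {C : Type}

/-- `E` codes the head-to-head results. -/
def Good (E : C → C → ℕ) : Prop := ∀ x y, E x y ≤ 2 ∧ E y x = 2 - E x y

def phl (E : C → C → ℕ) (x : C) : List C → Prop
  | [] => True
  | [a] => Bool.not (Nat.beq (E x a) 0) = true
  | [a, b] => ph3 (E x a) (E x b) (E a b) = true
  | [a, b, c] => ph (E x a) (E x b) (E x c) (E a b) (E a c) (E b c) = true
  | _ => False

def W4 (E : C → C → ℕ) (s : Finset C) (x : C) : Prop :=
  ∃ l : List C, (x :: l).Nodup ∧ (∀ z, z ∈ s ↔ z ∈ x :: l) ∧ phl E x l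

def W5 (E : C → C → ℕ) (s : Finset C) (x : C) : Prop :=
  ∃ y ∈ s, E x y = 2 ∧ W4 E (s.erase y) x

def Fw (E : C → C → ℕ) (s : Finset C) (x : C) : Prop :=
  if s.card ≤ 4 then W4 E s x else (W5 E s x ∨ ∀ z ∈ s, ¬ W5 E s z)

def FW (E : C → C → ℕ) (s : Finset C) : Finset C := s.filter (Fw E s)

/-! transport along an injection -/

theorem phl_map {D : Type} (f : C → D) (E : D → D → ℕ) (x : C) (l : List C) :
    phl E (f x) (l.map f) ↔ phl (fun a b => E (f a) (f b)) x l := by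
  match l with
  | [] => simp [phl]
  | [a] => simp [phl]
  | [a, b] => simp [phl]
  | [a, b, c] => simp [phl]
  | a :: b :: c :: d :: l => simp [phl]

theorem W4_equiv (f : C ≃ C) (E : C → C → ℕ) (s : Finset C) (x : C) :
    W4 E (s.image f) (f x) ↔ W4 (fun a b => E (f a) (f b)) s x := by
  constructor
  · rintro ⟨l, h1, h2, h3⟩
    have hl : l = (l.map f.symm).map f := by simp
    refine ⟨l.map f.symm, ?_, ?_, ?_⟩
    · have := h1.map f.symm.injective
      simpa using this
    · intro z
      have := h2 (f z)
      simp only [Finset.mem_image, EmbeddingLike.apply_eq_iff_eq, exists_eq_right,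
        List.mem_cons] at this
      rw [this]
      simp [Equiv.symm_apply_eq]
    · rw [hl] at h3
      exact (phl_map f E x _).1 h3
  · rintro ⟨l, h1, h2, h3⟩
    refine ⟨l.map f, ?_, ?_, (phl_map f E x _).2 h3⟩
    · have := h1.map f.injective
      simpa using this
    · intro z
      simp only [Finset.mem_image, h2]
      simp only [List.mem_cons, List.mem_map]
      constructor
      · rintro ⟨a, rfl | h, rfl⟩
        · exact Or.inl rfl
        · exact Or.inr ⟨a, h, rfl⟩
      · rintro (rfl | ⟨a, h, rfl⟩)
        · exact ⟨x, Or.inl rfl, rfl⟩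
        · exact ⟨a, Or.inr h, rfl⟩

theorem W5_equiv (f : C ≃ C) (E : C → C → ℕ) (s : Finset C) (x : C) :
    W5 E (s.image f) (f x) ↔ W5 (fun a b => E (f a) (f b)) s x := by
  have key : ∀ y, (s.image f).erase (f y) = (s.erase y).image f := by
    intro y; rw [Finset.image_erase f.injective]
  constructor
  · rintro ⟨y, hy, h1, h2⟩
    obtain ⟨y, hy', rfl⟩ := Finset.mem_image.1 hy
    rw [key, W4_equiv] at h2
    exact ⟨y, hy', h1, h2⟩
  · rintro ⟨y, hy, h1, h2⟩
    refine ⟨f y, Finset.mem_image_of_mem _ hy, h1, ?_⟩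
    rw [key, W4_equiv]; exact h2

theorem Fw_equiv (f : C ≃ C) (E : C → C → ℕ) (s : Finset C) (x : C) :
    Fw E (s.image f) (f x) ↔ Fw (fun a b => E (f a) (f b)) s x := by
  unfold Fw
  rw [Finset.card_image_of_injective _ f.injective]
  simp only [W4_equiv, W5_equiv, Finset.forall_mem_image]

theorem FW_equiv (f : C ≃ C) (E : C → C → ℕ) (s : Finset C) :
    FW E (s.image f) = (FW (fun a b => E (f a) (f b)) s).image f := by
  unfold FW
  rw [Finset.filter_image]
  simp only [Fw_equiv]

/-! locality -/

theorem phl_congr (E E' : C → C → ℕ) (x : C) (l : List C)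
    (h : ∀ a ∈ x :: l, ∀ b ∈ x :: l, E a b = E' a b) (H : phl E x l) : phl E' x l := by
  match l with
  | [] => simp [phl]
  | [a] => simp_all [phl]
  | [a, b] => simp_all [phl]
  | [a, b, c] => simp_all [phl]
  | a :: b :: c :: d :: l => simp [phl] at H

theorem W4_congr' (E E' : C → C → ℕ) (s : Finset C) (x : C)
    (h : ∀ a ∈ s, ∀ b ∈ s, E a b = E' a b) (H : W4 E s x) : W4 E' s x := by
  obtain ⟨l, h1, h2, h3⟩ := H
  refine ⟨l, h1, h2, phl_congr E E' x l ?_ h3⟩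
  intro a ha b hb
  exact h a ((h2 a).2 ha) b ((h2 b).2 hb)

theorem W4_congr (E E' : C → C → ℕ) (s : Finset C) (x : C)
    (h : ∀ a ∈ s, ∀ b ∈ s, E a b = E' a b) : W4 E s x ↔ W4 E' s x :=
  ⟨W4_congr' E E' s x h, W4_congr' E' E s x fun a ha b hb => (h a ha b hb).symm⟩

theorem FW4_congr (E E' : C → C → ℕ) (s : Finset C) (hs : s.card ≤ 4)
    (h : ∀ a ∈ s, ∀ b ∈ s, E a b = E' a b) : FW E s = FW E' s := by
  unfold FW Fw
  simp only [hs, if_true, W4_congr E E' s _ h]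

/-! evaluation -/

theorem ph_symm {E : C → C → ℕ} (hE : Good E) (x a b c : C) :
    (ph (E x a) (E x b) (E x c) (E a b) (E a c) (E b c) =
      ph (E x b) (E x a) (E x c) (E b a) (E b c) (E a c)) ∧
    (ph (E x a) (E x b) (E x c) (E a b) (E a c) (E b c) =
      ph (E x a) (E x c) (E x b) (E a c) (E a b) (E c b)) := by
  have := all3_spec (all3_spec (all3_spec (all3_spec (all3_spec (all3_spec chkS_true
    (E x a) (hE _ _).1) (E x b) (hE _ _).1) (E x c) (hE _ _).1) (E a b) (hE _ _).1)
    (E a c) (hE _ _).1) (E b c) (hE _ _).1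
  simp only [Bool.and_eq_true, beq_iff_eq] at this
  rw [(hE a b).2, (hE b c).2]
  exact this

theorem ph3_symm {E : C → C → ℕ} (hE : Good E) (x a b : C) :
    ph3 (E x a) (E x b) (E a b) = ph3 (E x b) (E x a) (E b a) := by
  have := all3_spec (all3_spec (all3_spec chkS3_true
    (E x a) (hE _ _).1) (E x b) (hE _ _).1) (E a b) (hE _ _).1
  simp only [beq_iff_eq] at this
  rw [(hE a b).2]
  exact this

theorem phl_perm {E : C → C → ℕ} (hE : Good E) (x : C) {l l' : List C} (h : l.Perm l') :
    phl E x l → phl E x l' := by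
  -- adjacent swaps suffice
  have hlen := h.length_eq
  match l, l' with
  | [], [] => exact id
  | [a], [a'] => 
    obtain rfl : a' = a := by simpa using h.symm
    exact id
  | [a, b], [a', b'] =>
    have h' := h
    rw [← List.mem_permutations] at h'
    simp [List.permutations, List.permutationsAux, List.permutationsAux.rec,
      List.permutationsAux2] at h'
    rcases h' with ⟨rfl, rfl⟩ | ⟨rfl, rfl⟩
    · exact id
    · simp only [phl]; rw [ph3_symm hE]; exact id
  | [a, b, c], [a', b', c'] =>
    have h' := h
    rw [← List.mem_permutations] at h'
    simp [List.permutations, List.permutationsAux, List.permutationsAux.rec,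
      List.permutationsAux2] at h'
    simp only [phl]
    have s1 := fun a b c => (ph_symm hE x a b c).1
    have s2 := fun a b c => (ph_symm hE x a b c).2
    rcases h' with ⟨rfl, rfl, rfl⟩ | ⟨rfl, rfl, rfl⟩ | ⟨rfl, rfl, rfl⟩ | ⟨rfl, rfl, rfl⟩ |
      ⟨rfl, rfl, rfl⟩ | ⟨rfl, rfl, rfl⟩ <;> intro H <;> grind
  | a :: b :: c :: d :: l, _ => intro H; simp [phl] at H

theorem W4_eval {E : C → C → ℕ} (hE : Good E) {s : Finset C} {x : C} (l : List C)
    (h1 : (x :: l).Nodup) (h2 : ∀ z, z ∈ s ↔ z ∈ x :: l) : W4 E s x ↔ phl E x l := by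
  constructor
  · rintro ⟨l', h1', h2', h3⟩
    refine phl_perm hE x ?_ h3
    have : (x :: l').Perm (x :: l) :=
      (List.perm_ext_iff_of_nodup h1' h1).2 fun z => by rw [← h2, ← h2']
    exact (List.perm_cons x).1 this
  · intro h; exact ⟨l, h1, h2, h⟩

end rule

attribute [local irreducible] ph ph3 Bv

section main

variable {C : Type}

theorem nb (n : ℕ) : Bool.not (Nat.beq n 0) = true ↔ n ≠ 0 := by
  cases n <;> simp [Nat.beq]

theorem card_FW {E : C → C → ℕ} {s : Finset C} (L : List C) (h1 : L.Nodup)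
    (h2 : ∀ z, z ∈ s ↔ z ∈ L) :
    (FW E s).card = (L.map (fun z => if Fw E s z then 1 else 0)).sum := by
  have : s = L.toFinset := by ext z; simp [h2]
  unfold FW
  rw [Finset.card_filter]
  conv_lhs => rw [this]
  rw [List.sum_toFinset _ h1, ← this]

theorem ite_bn {p : Prop} {b : Bool} (h : p ↔ b = true) : (if p then 1 else 0) = bn b := by
  cases b <;> simp_all [bn]

theorem card_of_list {s : Finset C} (L : List C) (h1 : L.Nodup)
    (h2 : ∀ z, z ∈ s ↔ z ∈ L) : s.card = L.length := by
  have : s = L.toFinset := by ext z; simp [h2]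
  rw [this, List.toFinset_card_of_nodup h1]

theorem Fw_eval {E : C → C → ℕ} (hE : Good E) {s : Finset C} {x : C} (l : List C)
    (h1 : (x :: l).Nodup) (h2 : ∀ z, z ∈ s ↔ z ∈ x :: l) (hl : l.length ≤ 3) :
    Fw E s x ↔ phl E x l := by
  have := card_of_list _ h1 h2
  simp only [List.length_cons] at this
  unfold Fw
  rw [if_pos (by omega), W4_eval hE l h1 h2]

theorem W5_eval {E : C → C → ℕ} (hE : Good E) {s : Finset C} {v p q r t : C}
    (h1 : [v, p, q, r, t].Nodup) (h2 : ∀ z, z ∈ s ↔ z ∈ [v, p, q, r, t]) :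
    W5 E s v ↔ Bv (E v p) (E v q) (E v r) (E v t) (E p q) (E p r) (E p t) (E q r) (E q t)
      (E r t) = true := by
  have hvv : E v v ≠ 2 := by have := (hE v v).2; have := (hE v v).1; omega
  have n1 : [v, q, r, t].Nodup := by simp at h1 ⊢; tauto
  have n2 : [v, p, r, t].Nodup := by simp at h1 ⊢; tauto
  have n3 : [v, p, q, t].Nodup := by simp at h1 ⊢; tauto
  have n4 : [v, p, q, r].Nodup := by simp at h1 ⊢; tauto
  have e1 := W4_eval hE (s := s.erase p) _ n1 (by intro z; simp [h2] at h1 ⊢; grind)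
  have e2 := W4_eval hE (s := s.erase q) _ n2 (by intro z; simp [h2] at h1 ⊢; grind)
  have e3 := W4_eval hE (s := s.erase r) _ n3 (by intro z; simp [h2] at h1 ⊢; grind)
  have e4 := W4_eval hE (s := s.erase t) _ n4 (by intro z; simp [h2] at h1 ⊢; grind)
  unfold W5 Bv
  simp only [phl] at e1 e2 e3 e4
  simp only [h2, Bool.or_eq_true, Bool.and_eq_true, Nat.beq_eq, ← e1, ← e2, ← e3, ← e4]
  simp only [List.mem_cons, List.not_mem_nil, or_false, exists_eq_or_imp, exists_eq_left,
    hvv, false_and, false_or]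

set_option maxHeartbeats 1000000 in
theorem main_prop {E : C → C → ℕ} (hE : Good E) {s : Finset C} (hs : s.card ≤ 5) {x y : C}
    (hx : x ∈ s) (hy : y ∈ s) (hxy : x ≠ y) (hw : E x y = 2) (H : Fw E (s.erase y) x) :
    Fw E s x ∧ (FW E s).card ≤ (FW E (s.erase y)).card := by
  obtain ⟨l, hl⟩ : ∃ l, l = ((s.erase y).erase x).toList := ⟨_, rfl⟩
  have hn : l.Nodup := hl ▸ Finset.nodup_toList _
  have hm : ∀ z, z ∈ l ↔ z ≠ x ∧ z ≠ y ∧ z ∈ s := by intro z; simp [hl]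
  have hlen : l.length ≤ 3 := by
    rw [hl, Finset.length_toList, Finset.card_erase_of_mem (by simp [hx, hxy]),
      Finset.card_erase_of_mem hy]; omega
  clear hl
  have N : (x :: y :: l).Nodup := by simp [hm, hn, hxy]
  have N' : (x :: l).Nodup := by simp [hm, hn]
  have M : ∀ z, z ∈ s ↔ z ∈ x :: y :: l := by
    intro z; simp only [List.mem_cons, hm]; grind
  have M' : ∀ z, z ∈ s.erase y ↔ z ∈ x :: l := by
    intro z; simp only [List.mem_cons, hm, Finset.mem_erase]; grind
  clear hm hn
  have hw' : E y x = 0 := by have := (hE x y).2; omega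
  rw [card_FW _ N M, card_FW _ N' M']
  match l with
  | [] =>
    have ex := Fw_eval hE _ N M (by simp)
    have ey : Fw E s y ↔ _ := Fw_eval hE [x] (by simp [hxy.symm])
      (by intro z; rw [M]; simp only [List.mem_cons, List.not_mem_nil, or_false]; clear * -; grind) (by simp)
    simp only [phl, hw, hw'] at ex ey
    have a1 : Fw E s x := ex.2 (by decide)
    have a2 : ¬ Fw E s y := by rw [ey]; decide
    simp [a1, a2, H]
  | [a] =>
    have ex := Fw_eval hE _ N M (by simp)
    have ey : Fw E s y ↔ _ := Fw_eval hE [x, a] (by simp at N ⊢; grind)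
      (by intro z; rw [M]; simp only [List.mem_cons, List.not_mem_nil, or_false]; clear * -; grind) (by simp)
    have ea : Fw E s a ↔ _ := Fw_eval hE [x, y] (by simp at N ⊢; grind)
      (by intro z; rw [M]; simp only [List.mem_cons, List.not_mem_nil, or_false]; clear * -; grind) (by simp)
    have fx := Fw_eval hE _ N' M' (by simp)
    have fa : Fw E (s.erase y) a ↔ _ := Fw_eval hE [x] (by simp at N ⊢; grind)
      (by intro z; rw [M']; simp only [List.mem_cons, List.not_mem_nil, or_false]; clear * -; grind) (by simp)
    simp only [phl, hw, hw', (hE x a).2, (hE y a).2] at ex ey ea fx fa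
    have K := chk3_true
    unfold chk3 at K
    replace K := all3_spec K (E x a) (hE _ _).1
    replace K := imp_spec K (fx.1 H)
    replace K := all3_spec K (E y a) (hE _ _).1
    simp only [Bool.and_eq_true, Nat.ble_eq] at K
    have a1 : Fw E s x := ex.2 K.1
    refine ⟨a1, ?_⟩
    have K2 := K.2
    rw [← ite_bn ey, ← ite_bn ea, ← ite_bn fa] at K2
    simp only [List.map_cons, List.map_nil, List.sum_cons, List.sum_nil, a1, H, if_true]
    omega
  | [a, b] =>
    have ex := Fw_eval hE _ N M (by simp)
    have ey : Fw E s y ↔ _ := Fw_eval hE [x, a, b] (by simp at N ⊢; grind)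
      (by intro z; rw [M]; simp only [List.mem_cons, List.not_mem_nil, or_false]; clear * -; grind) (by simp)
    have ea : Fw E s a ↔ _ := Fw_eval hE [x, y, b] (by simp at N ⊢; grind)
      (by intro z; rw [M]; simp only [List.mem_cons, List.not_mem_nil, or_false]; clear * -; grind) (by simp)
    have eb : Fw E s b ↔ _ := Fw_eval hE [x, y, a] (by simp at N ⊢; grind)
      (by intro z; rw [M]; simp only [List.mem_cons, List.not_mem_nil, or_false]; clear * -; grind) (by simp)
    have fx := Fw_eval hE _ N' M' (by simp)
    have fa : Fw E (s.erase y) a ↔ _ := Fw_eval hE [x, b] (by simp at N ⊢; grind)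
      (by intro z; rw [M']; simp only [List.mem_cons, List.not_mem_nil, or_false]; clear * -; grind) (by simp)
    have fb : Fw E (s.erase y) b ↔ _ := Fw_eval hE [x, a] (by simp at N ⊢; grind)
      (by intro z; rw [M']; simp only [List.mem_cons, List.not_mem_nil, or_false]; clear * -; grind) (by simp)
    simp only [phl, hw, hw', (hE x a).2, (hE y a).2, (hE x b).2, (hE y b).2, (hE a b).2]
      at ex ey ea eb fx fa fb
    have K := chk4_true
    unfold chk4 at K
    replace K := all3_spec K (E x a) (hE _ _).1
    replace K := all3_spec K (E x b) (hE _ _).1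
    replace K := all3_spec K (E a b) (hE _ _).1
    replace K := imp_spec K (fx.1 H)
    replace K := all3_spec K (E y a) (hE _ _).1
    replace K := all3_spec K (E y b) (hE _ _).1
    simp only [Bool.and_eq_true, Nat.ble_eq] at K
    have a1 : Fw E s x := ex.2 K.1
    refine ⟨a1, ?_⟩
    have K2 := K.2
    rw [← ite_bn ey, ← ite_bn ea, ← ite_bn eb, ← ite_bn fa, ← ite_bn fb] at K2
    simp only [List.map_cons, List.map_nil, List.sum_cons, List.sum_nil, a1, H, if_true]
    omega
  | [a, b, c] =>
    have hc : s.card = 5 := card_of_list _ N M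
    have hx5 : W5 E s x := by
      refine ⟨y, hy, hw, ?_⟩
      have hc' : (s.erase y).card ≤ 4 := by rw [Finset.card_erase_of_mem hy]; omega
      unfold Fw at H
      rwa [if_pos hc'] at H
    have red : ∀ z, Fw E s z ↔ W5 E s z := by
      intro z
      unfold Fw
      rw [if_neg (by omega)]
      constructor
      · rintro (h | h)
        · exact h
        · exact absurd hx5 (h x hx)
      · exact Or.inl
    have a1 : Fw E s x := (red x).2 hx5
    refine ⟨a1, ?_⟩
    have ey := (red y).trans (W5_eval hE (s := s) (v := y) (p := x) (q := a) (r := b) (t := c)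
      (by simp at N ⊢; grind) (by intro z; rw [M]; simp only [List.mem_cons, List.not_mem_nil, or_false]; clear * -; grind))
    have ea := (red a).trans (W5_eval hE (s := s) (v := a) (p := x) (q := y) (r := b) (t := c)
      (by simp at N ⊢; grind) (by intro z; rw [M]; simp only [List.mem_cons, List.not_mem_nil, or_false]; clear * -; grind))
    have eb := (red b).trans (W5_eval hE (s := s) (v := b) (p := x) (q := y) (r := a) (t := c)
      (by simp at N ⊢; grind) (by intro z; rw [M]; simp only [List.mem_cons, List.not_mem_nil, or_false]; clear * -; grind))
    have ec := (red c).trans (W5_eval hE (s := s) (v := c) (p := x) (q := y) (r := a) (t := b)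
      (by simp at N ⊢; grind) (by intro z; rw [M]; simp only [List.mem_cons, List.not_mem_nil, or_false]; clear * -; grind))
    have fx := Fw_eval hE _ N' M' (by simp)
    have fa : Fw E (s.erase y) a ↔ _ := Fw_eval hE [x, b, c] (by simp at N ⊢; grind)
      (by intro z; rw [M']; simp only [List.mem_cons, List.not_mem_nil, or_false]; clear * -; grind) (by simp)
    have fb : Fw E (s.erase y) b ↔ _ := Fw_eval hE [x, a, c] (by simp at N ⊢; grind)
      (by intro z; rw [M']; simp only [List.mem_cons, List.not_mem_nil, or_false]; clear * -; grind) (by simp)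
    have fc : Fw E (s.erase y) c ↔ _ := Fw_eval hE [x, a, b] (by simp at N ⊢; grind)
      (by intro z; rw [M']; simp only [List.mem_cons, List.not_mem_nil, or_false]; clear * -; grind) (by simp)
    simp only [phl, hw, hw', (hE x a).2, (hE y a).2, (hE x b).2, (hE y b).2, (hE a b).2,
      (hE x c).2, (hE y c).2, (hE a c).2, (hE b c).2]
      at ey ea eb ec fx fa fb fc
    have K := chk5_true
    unfold chk5 at K
    replace K := all3_spec K (E x a) (hE _ _).1
    replace K := all3_spec K (E x b) (hE _ _).1
    replace K := all3_spec K (E x c) (hE _ _).1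
    replace K := all3_spec K (E a b) (hE _ _).1
    replace K := all3_spec K (E a c) (hE _ _).1
    replace K := all3_spec K (E b c) (hE _ _).1
    replace K := imp_spec K (fx.1 H)
    replace K := all3_spec K (E y a) (hE _ _).1
    replace K := all3_spec K (E y b) (hE _ _).1
    replace K := all3_spec K (E y c) (hE _ _).1
    simp only [Nat.ble_eq] at K
    rw [← ite_bn ey, ← ite_bn ea, ← ite_bn eb, ← ite_bn ec, ← ite_bn fa, ← ite_bn fb,
      ← ite_bn fc] at K
    simp only [List.map_cons, List.map_nil, List.sum_cons, List.sum_nil, a1, H, if_true]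
    omega
  | _ :: _ :: _ :: _ :: _ => exfalso; simp only [List.length_cons] at hlen; omega

set_option maxHeartbeats 1000000 in
theorem FW_nonempty {E : C → C → ℕ} (hE : Good E) {s : Finset C} (hne : s.Nonempty) :
    (FW E s).Nonempty := by
  suffices h : ∃ z ∈ s, Fw E s z by
    obtain ⟨z, h1, h2⟩ := h
    exact ⟨z, Finset.mem_filter.2 ⟨h1, h2⟩⟩
  by_cases hs : s.card ≤ 4
  · obtain ⟨l, hl⟩ : ∃ l, l = s.toList := ⟨_, rfl⟩
    have N : l.Nodup := hl ▸ Finset.nodup_toList _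
    have M : ∀ z, z ∈ s ↔ z ∈ l := by intro z; simp [hl]
    have hlen : l.length = s.card := by rw [hl, Finset.length_toList]
    clear hl
    match l with
    | [] => obtain ⟨z, hz⟩ := hne; simp [M] at hz
    | [x] => exact ⟨x, by simp [M], (Fw_eval hE _ N M (by simp)).2 trivial⟩
    | [x, a] =>
      have fx := Fw_eval hE _ N M (by simp)
      have fa : Fw E s a ↔ _ := Fw_eval hE [x] (by simp at N ⊢; grind)
        (by intro z; rw [M]; simp only [List.mem_cons, List.not_mem_nil, or_false]; clear * -; grind) (by simp)
      simp only [phl, nb] at fx fa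
      by_cases h : E x a = 0
      · exact ⟨a, by simp [M], fa.2 (by rw [(hE x a).2, h]; decide)⟩
      · exact ⟨x, by simp [M], fx.2 h⟩
    | [x, a, b] =>
      have fx := Fw_eval hE _ N M (by simp)
      have fa : Fw E s a ↔ _ := Fw_eval hE [x, b] (by simp at N ⊢; grind)
        (by intro z; rw [M]; simp only [List.mem_cons, List.not_mem_nil, or_false]; clear * -; grind) (by simp)
      have fb : Fw E s b ↔ _ := Fw_eval hE [x, a] (by simp at N ⊢; grind)
        (by intro z; rw [M]; simp only [List.mem_cons, List.not_mem_nil, or_false]; clear * -; grind) (by simp)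
      simp only [phl, (hE x a).2, (hE x b).2, (hE a b).2] at fx fa fb
      have K := chkN3_true
      unfold chkN3 at K
      replace K := all3_spec K (E x a) (hE _ _).1
      replace K := all3_spec K (E x b) (hE _ _).1
      replace K := all3_spec K (E a b) (hE _ _).1
      simp only [Bool.or_eq_true, ← fx, ← fa, ← fb] at K
      rcases K with K | K | K
      · exact ⟨x, by simp [M], K⟩
      · exact ⟨a, by simp [M], K⟩
      · exact ⟨b, by simp [M], K⟩
    | [x, a, b, c] =>
      have fx := Fw_eval hE _ N M (by simp)
      have fa : Fw E s a ↔ _ := Fw_eval hE [x, b, c] (by simp at N ⊢; grind)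
        (by intro z; rw [M]; simp only [List.mem_cons, List.not_mem_nil, or_false]; clear * -; grind) (by simp)
      have fb : Fw E s b ↔ _ := Fw_eval hE [x, a, c] (by simp at N ⊢; grind)
        (by intro z; rw [M]; simp only [List.mem_cons, List.not_mem_nil, or_false]; clear * -; grind) (by simp)
      have fc : Fw E s c ↔ _ := Fw_eval hE [x, a, b] (by simp at N ⊢; grind)
        (by intro z; rw [M]; simp only [List.mem_cons, List.not_mem_nil, or_false]; clear * -; grind) (by simp)
      simp only [phl, (hE x a).2, (hE x b).2, (hE a b).2, (hE x c).2, (hE a c).2, (hE b c).2]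
        at fx fa fb fc
      have K := chkN_true
      unfold chkN at K
      replace K := all3_spec K (E x a) (hE _ _).1
      replace K := all3_spec K (E x b) (hE _ _).1
      replace K := all3_spec K (E x c) (hE _ _).1
      replace K := all3_spec K (E a b) (hE _ _).1
      replace K := all3_spec K (E a c) (hE _ _).1
      replace K := all3_spec K (E b c) (hE _ _).1
      simp only [Bool.or_eq_true, ← fx, ← fa, ← fb, ← fc] at K
      rcases K with K | K | K | K
      · exact ⟨x, by simp [M], K⟩
      · exact ⟨a, by simp [M], K⟩
      · exact ⟨b, by simp [M], K⟩
      · exact ⟨c, by simp [M], K⟩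
    | _ :: _ :: _ :: _ :: _ :: _ => simp at hlen; omega
  · by_cases h : ∃ z ∈ s, W5 E s z
    · obtain ⟨z, h1, h2⟩ := h
      refine ⟨z, h1, ?_⟩
      unfold Fw; rw [if_neg hs]; exact Or.inl h2
    · push Not at h
      obtain ⟨z, hz⟩ := hne
      refine ⟨z, hz, ?_⟩
      unfold Fw; rw [if_neg hs]; exact Or.inr h

theorem Fw_pair {E : C → C → ℕ} (hE : Good E) {s : Finset C} {x y : C} (hxy : x ≠ y)
    (hs : s = {x, y}) : Fw E s x ↔ E x y ≠ 0 := by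
  have fx : Fw E s x ↔ _ := Fw_eval hE [y] (by simpa using hxy)
        (by intro z; rw [hs]; simp) (by simp)
  rw [fx]
  simp only [phl, nb]

end main
section final

variable {C V : Type}

def EP (P : Profile C V) (x y : C) : ℕ :=
  if 0 < P.margin x y then 2 else if P.margin x y < 0 then 0 else 1

theorem margin_neg (P : Profile C V) (x y : C) : P.margin y x = - P.margin x y := by
  unfold Profile.margin; ring

theorem EP_good (P : Profile C V) : Good (EP P) := by
  intro x y
  have := margin_neg P x y
  unfold EP
  split_ifs <;> omega

theorem EP_congr {P Q : Profile C V} {x y x' y' : C} (h : P.margin x y = Q.margin x' y') :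
    EP P x y = EP Q x' y' := by
  unfold EP; rw [h]

theorem margin_restrict (P : Profile C V) (A : Finset C) (hA : A.Nonempty) (hs : A ⊆ P.cands)
    {x y : C} (hx : x ∈ A) (hy : y ∈ A) : (P.restrict A hA hs).margin x y = P.margin x y := by
  simp [Profile.margin, Profile.restrict, restrictRel, hx, hy]

theorem margin_swapVoters (P : Profile C V) (i j : V) (x y : C) :
    (P.swapVoters i j).margin x y = P.margin x y := by
  have key : ∀ u v, ((P.swapVoters i j).voters.filter
      (fun k => (P.swapVoters i j).ballot k u v)).card =
      (P.voters.filter (fun k => P.ballot k u v)).card := by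
    intro u v
    have : (P.swapVoters i j).voters.filter (fun k => (P.swapVoters i j).ballot k u v) =
        (P.voters.filter (fun k => P.ballot k u v)).image (Equiv.swap i j) := by
      ext k
      simp only [Finset.mem_filter, Finset.mem_image]
      constructor
      · rintro ⟨h1, h2⟩
        obtain ⟨m, hm, rfl⟩ := Finset.mem_image.1 h1
        refine ⟨m, ⟨hm, ?_⟩, rfl⟩
        simpa [Profile.swapVoters] using h2
      · rintro ⟨m, ⟨hm, h2⟩, rfl⟩
        exact ⟨Finset.mem_image_of_mem _ hm, by simpa [Profile.swapVoters] using h2⟩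
    rw [this, Finset.card_image_of_injective _ (Equiv.swap i j).injective]
  unfold Profile.margin
  rw [key, key]

theorem exists_voting_method_aux (C V : Type) [Infinite C] [Infinite V] :
    ∃ F : VotingMethod C V,
      F.dom = {P : Profile C V | P.cands.card ≤ 5} ∧
      F.winners = fun P => FW (EP P) P.cands := by
  obtain ⟨c⟩ : Nonempty C := inferInstance
  refine ⟨⟨{P : Profile C V | P.cands.card ≤ 5}, ?_, fun P => FW (EP P) P.cands, ?_, ?_⟩,
    rfl, rfl⟩
  · refine ⟨⟨∅, {c}, by simp, fun _ _ _ => False, by simp⟩, by simp⟩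
  · intro P _
    exact FW_nonempty (EP_good P) P.cands_nonempty
  · intro P _
    exact Finset.filter_subset _ _

/-- If `x` is the only winner against `y`, then `x` beats `y`. -/
theorem pair_wins (P : Profile C V) {x y : C} (hxy : x ≠ y) (hx : x ∈ P.cands)
    (hy : y ∈ P.cands) (h : FW (EP (P.pair x y hx hy)) (P.pair x y hx hy).cands = {x}) :
    EP P x y = 2 := by
  have hg := EP_good (P.pair x y hx hy)
  have hc : (P.pair x y hx hy).cands = {x, y} := rfl
  have e : EP (P.pair x y hx hy) y x = EP P y x :=
    EP_congr (margin_restrict P _ _ _ (by simp) (by simp))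
  have : ¬ Fw (EP (P.pair x y hx hy)) (P.pair x y hx hy).cands y := by
    intro hy'
    have : y ∈ FW (EP (P.pair x y hx hy)) (P.pair x y hx hy).cands :=
      Finset.mem_filter.2 ⟨by simp [hc], hy'⟩
    rw [h] at this
    exact hxy (Finset.mem_singleton.1 this).symm
  rw [Fw_pair hg hxy.symm (by rw [hc, Finset.pair_comm]), e] at this
  have h2 := (EP_good P y x).2
  omega

theorem final_step (P : Profile C V) (hP : P.cands.card ≤ 5) {x y : C} (hxy : x ≠ y)
    (hx : x ∈ P.cands) (hy : y ∈ P.cands) (h : (P.cands.erase y).Nonempty)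
    (h1 : x ∈ FW (EP (P.minus y h)) (P.minus y h).cands)
    (h2 : FW (EP (P.pair x y hx hy)) (P.pair x y hx hy).cands = {x}) :
    x ∈ FW (EP P) P.cands ∧
      (FW (EP P) P.cands).card ≤ (FW (EP (P.minus y h)) (P.minus y h).cands).card := by
  have hw := pair_wins P hxy hx hy h2
  have hc : (P.minus y h).cands = P.cands.erase y := rfl
  have e : FW (EP (P.minus y h)) (P.minus y h).cands = FW (EP P) (P.cands.erase y) := by
    rw [hc]
    apply FW4_congr
    · rw [Finset.card_erase_of_mem hy]; omega
    · intro a ha b hb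
      exact EP_congr (margin_restrict P _ _ _ ha hb)
  rw [e] at h1 ⊢
  have := main_prop (EP_good P) hP hx hy hxy hw (Finset.mem_filter.1 h1).2
  exact ⟨Finset.mem_filter.2 ⟨hx, this.1⟩, this.2⟩

end final

/-- There exists a voting method whose domain is the set of all
profiles with at most 5 candidates that satisfies anonymity, neutrality, binary
quasi-resoluteness, binary γ, and α-resoluteness. -/
theorem exists_voting_method_five_candidates (C V : Type) [Infinite C] [Infinite V] :
    ∃ F : VotingMethod C V,
      F.dom = {P : Profile C V | P.cands.card ≤ 5} ∧
      F.Anonymous ∧ F.Neutral ∧ F.BinaryQuasiResolute ∧ F.BinaryGamma ∧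
      F.AlphaResolute := by
  obtain ⟨F, hd, hw⟩ := exists_voting_method_aux C V
  refine ⟨F, hd, ?_, ?_, ?_, ?_, ?_⟩
  · intro P _ i j _
    rw [hw]
    have : EP (P.swapVoters i j) = EP P := by
      funext x y; exact EP_congr (margin_swapVoters P i j x y)
    show FW (EP (P.swapVoters i j)) P.cands = _
    rw [this]
  · intro P _ a b _
    rw [hw]
    show FW (EP (P.swapCands a b)) (P.cands.image (Equiv.swap a b)) = _
    rw [FW_equiv]
    have : (fun x y => EP (P.swapCands a b) (Equiv.swap a b x) (Equiv.swap a b y)) = EP P := by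
      funext x y
      apply EP_congr
      simp [Profile.margin, Profile.swapCands, swapRel]
    rw [this]
  · intro P _ h2 hm
    rw [hw]
    obtain ⟨x, y, hxy, hs⟩ := Finset.card_eq_two.1 h2
    have hm' := hm x (by simp [hs]) y (by simp [hs]) hxy
    have ex := Fw_pair (EP_good P) hxy hs
    have ey := Fw_pair (EP_good P) hxy.symm (hs.trans (Finset.pair_comm x y))
    have hn := margin_neg P x y
    have N : [x, y].Nodup := by simpa using hxy
    have M : ∀ z, z ∈ P.cands ↔ z ∈ [x, y] := by intro z; simp [hs]
    show (FW (EP P) P.cands).card = 1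
    rw [card_FW _ N M]
    simp only [List.map_cons, List.map_nil, List.sum_cons, List.sum_nil, ex, ey]
    unfold EP
    rcases lt_or_gt_of_ne hm' with h | h
    · have : ¬ 0 < P.margin x y := by omega
      have : 0 < P.margin y x := by omega
      simp [*]
    · have : ¬ 0 < P.margin y x := by omega
      have : P.margin y x < 0 := by omega
      simp [*, h.le]
  · intro P hP x hx y hy hxy h _ _ h1 h2
    rw [hd] at hP
    rw [hw] at h1 h2 ⊢
    exact (final_step P hP hxy hx hy h h1 h2).1
  · intro P hP x hx y hy hxy h _ _ h1 h2
    rw [hd] at hP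
    rw [hw] at h1 h2 ⊢
    exact (final_step P hP hxy hx hy h h1 h2).2
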